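/- Let (T, Λ) be a cookie cutter system, let ψ : Λ → ℝ be Hölder continuous, let μ be a normalized Gibbs measure for ψ, and let α ∈ ℝ. If ψ − αφ is cohomologous to zero, i.e. there is a continuous h : Λ → ℝ with ψ − αφ = h∘T − h on Λ, then α equals the Hausdorff dimension of Λ. -/

import Mathlib

/-!
The number `exp (φⁿ x) = |(Tⁿ)'(x)|⁻¹` measures both the size and the mass of the `n`-th level
basic set around a point `x` of the repeller `Λ`.

* Size: two points with the same itinerary up to time `n` satisfy
  `|x - y| ≍ |Tⁿ x - Tⁿ y| * exp (φⁿ x)` (bounded distortion, `CookieCutter.distortion`), because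
  `log |T'|` is Hölder and `|Tⁱ x - Tⁱ y| ≤ lam ^ (i - n)`.
* Mass: a continuous transfer function is bounded on the compact set `Λ`, so the cohomology
  equation turns the Gibbs inequalities into `μ (Iₙ(x)) ≍ exp (α φⁿ x)`
  (`CookieCutter.gibbs_cyl`).

Since `φⁿ → -∞` and `μ` is finite, `α ≥ 0`. The covers of `Λ` by level `n` basic sets satisfy
`∑ diam ^ α ≲ ∑ μ (Iₙ) ≤ 1`, so the `α`-dimensional Hausdorff measure of `Λ` is finite and
`dimH Λ ≤ α`. If `α > 0`, let `n` be the last level at which `U ∩ Λ` lies in one basic set. Two of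
its points are mapped by `Tⁿ` into distinct intervals `I_i`, `I_j`, which lie a definite distance
apart, so `diam U ≳ exp (φⁿ x)` and `μ U ≲ (diam U) ^ α`. The mass distribution principle gives
`dimH Λ ≥ α`.

Basic sets are handled through itineraries: the connected component of a point in `level n` is the
set of points with the same itinerary up to time `n` (`CookieCutter.component_eq_cyl`).
-/

open MeasureTheory Set

/-- A cookie cutter system: `k ≥ 2` pairwise disjoint closed intervals
`[u j, v j] ⊆ [0,1]`, each mapped bijectively onto `[0,1]` by `T`, with
`T` differentiable with `ε`-Hölder derivative `T'` satisfying `|T'| ≥ lam > 1`. -/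
structure CookieCutter where
  k : ℕ
  two_le_k : 2 ≤ k
  u : Fin k → ℝ
  v : Fin k → ℝ
  T : ℝ → ℝ
  T' : ℝ → ℝ
  lam : ℝ
  eps : ℝ
  Ceps : ℝ
  nondeg : ∀ j, u j < v j
  subset_unit : ∀ j, Icc (u j) (v j) ⊆ Icc (0:ℝ) 1
  pair_disj : Pairwise fun i j => Disjoint (Icc (u i) (v i)) (Icc (u j) (v j))
  bijOn : ∀ j, BijOn T (Icc (u j) (v j)) (Icc (0:ℝ) 1)
  hasDeriv : ∀ x ∈ ⋃ j, Icc (u j) (v j),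
    HasDerivWithinAt T (T' x) (⋃ j, Icc (u j) (v j)) x
  eps_pos : 0 < eps
  Ceps_nonneg : 0 ≤ Ceps
  holder : ∀ x ∈ ⋃ j, Icc (u j) (v j), ∀ y ∈ ⋃ j, Icc (u j) (v j),
    |T' x - T' y| ≤ Ceps * |x - y| ^ eps
  one_lt_lam : 1 < lam
  expanding : ∀ x ∈ ⋃ j, Icc (u j) (v j), lam ≤ |T' x|

/-- The length of a (bounded) interval `I ⊆ ℝ`. -/
noncomputable def setLen (I : Set ℝ) : ℝ := sSup I - sInf I

namespace CookieCutter

variable (S : CookieCutter)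

/-- The domain `I_1 ∪ ⋯ ∪ I_k` of the cookie cutter map. -/
def domain : Set ℝ := ⋃ j, Icc (S.u j) (S.v j)

/-- The set `T^{-n}([0,1])`: points whose first `n` iterates stay in the domain. -/
def level (n : ℕ) : Set ℝ := {x | ∀ m < n, S.T^[m] x ∈ S.domain}

/-- `I` is an `n`-th level basic set, i.e. a connected component of `T^{-n}([0,1])`. -/
def IsBasic (n : ℕ) (I : Set ℝ) : Prop :=
  ∃ x ∈ S.level n, I = connectedComponentIn (S.level n) x

/-- The repeller `Λ = ⋂_{n ≥ 0} T^{-n}([0,1])`. -/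
def repeller : Set ℝ := {x | ∀ n, S.T^[n] x ∈ S.domain}

/-- The function `φ = - log |T'|`. -/
noncomputable def phi (x : ℝ) : ℝ := - Real.log |S.T' x|

/-- The Birkhoff sum `fⁿ(x) = Σ_{j<n} f(T^j x)`. -/
noncomputable def birkhoff (f : ℝ → ℝ) (n : ℕ) (x : ℝ) : ℝ :=
  ∑ j ∈ Finset.range n, f (S.T^[j] x)

/-- `f` is Hölder continuous on the set `A`. -/
def IsHolderOn (f : ℝ → ℝ) (A : Set ℝ) : Prop :=
  ∃ β C : ℝ, 0 < β ∧ β ≤ 1 ∧ 0 ≤ C ∧ ∀ x ∈ A, ∀ y ∈ A, |f x - f y| ≤ C * |x - y| ^ β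

/-- `μ` is a normalized Gibbs measure for the potential `ψ`: a Borel probability
measure on the repeller with `C ≤ μ(I_n^i)/e^{ψⁿ(x)} ≤ D` for every basic set. -/
def IsGibbs (ψ : ℝ → ℝ) (μ : Measure ℝ) : Prop :=
  IsProbabilityMeasure μ ∧ μ S.repellerᶜ = 0 ∧
    ∃ C D : ℝ, 0 < C ∧ 0 < D ∧
      ∀ n, 1 ≤ n → ∀ I, S.IsBasic n I → ∀ x ∈ I ∩ S.repeller,
        C * Real.exp (S.birkhoff ψ n x) ≤ (μ I).toReal ∧
          (μ I).toReal ≤ D * Real.exp (S.birkhoff ψ n x)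

/-- `ν` is a `T`-invariant Borel probability measure on the repeller. -/
def IsInvariantProb (ν : Measure ℝ) : Prop :=
  IsProbabilityMeasure ν ∧ ν S.repellerᶜ = 0 ∧
    ∀ A, MeasurableSet A → ν (S.T ⁻¹' A) = ν A

end CookieCutter

namespace CookieCutter

/-! ### Basic sets as cylinders -/

/-- The cylinder of order `n` around `x`: the points `y` such that `Tⁱ x` and `Tⁱ y` lie in a
common interval `I_j` for each `i < n`. -/
def cyl (S : CookieCutter) (n : ℕ) (x : ℝ) : Set ℝ :=
  {y | ∀ i < n, ∃ j, S.T^[i] x ∈ Icc (S.u j) (S.v j) ∧ S.T^[i] y ∈ Icc (S.u j) (S.v j)}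

lemma mem_domain (S : CookieCutter) {x : ℝ} {j : Fin S.k} (hx : x ∈ Icc (S.u j) (S.v j)) :
    x ∈ S.domain := mem_iUnion.2 ⟨j, hx⟩

lemma T_mem_unit (S : CookieCutter) {x : ℝ} (hx : x ∈ S.domain) : S.T x ∈ Icc (0:ℝ) 1 := by
  obtain ⟨j, hj⟩ := mem_iUnion.1 hx
  exact (S.bijOn j).mapsTo hj

lemma domain_subset_unit (S : CookieCutter) : S.domain ⊆ Icc (0:ℝ) 1 :=
  iUnion_subset S.subset_unit

lemma continuousOn_T (S : CookieCutter) : ContinuousOn S.T S.domain :=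
  fun x hx => (S.hasDeriv x hx).continuousWithinAt

lemma index_unique (S : CookieCutter) {x : ℝ} {i j : Fin S.k} (hi : x ∈ Icc (S.u i) (S.v i))
    (hj : x ∈ Icc (S.u j) (S.v j)) : i = j := by
  by_contra hij
  exact Set.disjoint_left.1 (S.pair_disj hij) hi hj

lemma repeller_T (S : CookieCutter) {x : ℝ} (hx : x ∈ S.repeller) : S.T x ∈ S.repeller := by
  intro n
  have := hx (n + 1)
  rwa [Function.iterate_succ_apply] at this

lemma repeller_iter (S : CookieCutter) {x : ℝ} (hx : x ∈ S.repeller) (n : ℕ) :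
    S.T^[n] x ∈ S.repeller := by
  induction n with
  | zero => exact hx
  | succ n ih => rw [Function.iterate_succ_apply']; exact S.repeller_T ih

lemma repeller_subset_level (S : CookieCutter) (n : ℕ) : S.repeller ⊆ S.level n :=
  fun _ hx m _ => hx m

lemma level_succ (S : CookieCutter) (n : ℕ) :
    S.level (n + 1) = S.domain ∩ S.T ⁻¹' S.level n := by
  ext x
  constructor
  · intro h
    refine ⟨h 0 (by omega), fun m hm => ?_⟩
    have := h (m + 1) (by omega)
    rwa [Function.iterate_succ_apply] at this
  · rintro ⟨h0, h1⟩ m hm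
    cases m with
    | zero => exact h0
    | succ m => rw [Function.iterate_succ_apply]; exact h1 m (by omega)

lemma isClosed_domain (S : CookieCutter) : IsClosed S.domain :=
  isClosed_iUnion_of_finite fun _ => isClosed_Icc

lemma isClosed_level (S : CookieCutter) (n : ℕ) : IsClosed (S.level n) := by
  induction n with
  | zero =>
    have : S.level 0 = univ := by ext x; simp [level]
    rw [this]; exact isClosed_univ
  | succ n ih =>
    rw [level_succ]
    exact S.continuousOn_T.preimage_isClosed_of_isClosed S.isClosed_domain ih

lemma isCompact_repeller (S : CookieCutter) : IsCompact S.repeller := by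
  have h : S.repeller = ⋂ n, S.level n := by
    ext x
    simp only [mem_iInter]
    exact ⟨fun h n m _ => h m, fun h n => h (n + 1) n (by omega)⟩
  refine isCompact_Icc.of_isClosed_subset (h ▸ isClosed_iInter S.isClosed_level)
    (fun x hx => S.domain_subset_unit (hx 0))

lemma cyl_zero (S : CookieCutter) (x : ℝ) : S.cyl 0 x = univ := by
  ext y; simp [cyl]

lemma mem_cyl_succ (S : CookieCutter) {n : ℕ} {x y : ℝ} :
    y ∈ S.cyl (n + 1) x ↔ (∃ j, x ∈ Icc (S.u j) (S.v j) ∧ y ∈ Icc (S.u j) (S.v j)) ∧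
      S.T y ∈ S.cyl n (S.T x) := by
  constructor
  · intro h
    refine ⟨h 0 (by omega), fun m hm => ?_⟩
    have := h (m + 1) (by omega)
    rwa [Function.iterate_succ_apply, Function.iterate_succ_apply] at this
  · rintro ⟨h0, h1⟩ m hm
    cases m with
    | zero => exact h0
    | succ m =>
      rw [Function.iterate_succ_apply, Function.iterate_succ_apply]; exact h1 m (by omega)

lemma mem_cyl_self (S : CookieCutter) {n : ℕ} {x : ℝ} (hx : x ∈ S.level n) : x ∈ S.cyl n x := by
  intro i hi
  obtain ⟨j, hj⟩ := mem_iUnion.1 (hx i hi)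
  exact ⟨j, hj, hj⟩

lemma cyl_subset_level (S : CookieCutter) (n : ℕ) (x : ℝ) : S.cyl n x ⊆ S.level n := by
  intro y hy i hi
  obtain ⟨j, -, hj⟩ := hy i hi
  exact S.mem_domain hj

/-- Cylinders are intervals, because each branch of `T` is monotone or antitone. -/
lemma cyl_ordConnected (S : CookieCutter) (n : ℕ) : ∀ x, (S.cyl n x).OrdConnected := by
  induction n with
  | zero => intro x; rw [cyl_zero]; exact ordConnected_univ
  | succ n ih =>
    intro x
    refine ⟨fun a ha b hb c hc => ?_⟩
    rw [mem_cyl_succ] at ha hb ⊢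
    obtain ⟨⟨j, hxj, haj⟩, ha'⟩ := ha
    obtain ⟨⟨j', hxj', hbj⟩, hb'⟩ := hb
    obtain rfl := S.index_unique hxj hxj'
    have hcj : c ∈ Icc (S.u j) (S.v j) := ⟨haj.1.trans hc.1, hc.2.trans hbj.2⟩
    refine ⟨⟨j, hxj, hcj⟩, ?_⟩
    have hcont : ContinuousOn S.T (Icc (S.u j) (S.v j)) :=
      S.continuousOn_T.mono fun _ => S.mem_domain
    rcases hcont.strictMonoOn_of_injOn_Icc' (S.nondeg j).le (S.bijOn j).injOn with hm | hm
    · exact (ih _).out ha' hb' ⟨hm.monotoneOn haj hcj hc.1, hm.monotoneOn hcj hbj hc.2⟩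
    · exact (ih _).out hb' ha' ⟨hm.antitoneOn hcj hbj hc.2, hm.antitoneOn haj hcj hc.1⟩

/-- A preconnected subset of the domain lies in a single interval `I_j`. -/
lemma preconnected_index (S : CookieCutter) {A : Set ℝ} (hA : IsPreconnected A)
    (hsub : A ⊆ S.domain) {x y : ℝ} (hx : x ∈ A) (hy : y ∈ A) :
    ∃ j, x ∈ Icc (S.u j) (S.v j) ∧ y ∈ Icc (S.u j) (S.v j) := by
  obtain ⟨j, hj⟩ := mem_iUnion.1 (hsub hx)
  refine ⟨j, hj, ?_⟩
  have hcl : IsClosed (⋃ i : {i // i ≠ j}, Icc (S.u i) (S.v i)) :=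
    isClosed_iUnion_of_finite fun _ => isClosed_Icc
  have hcov : A ⊆ Icc (S.u j) (S.v j) ∪ ⋃ i : {i // i ≠ j}, Icc (S.u i) (S.v i) := by
    intro z hz
    obtain ⟨i, hi⟩ := mem_iUnion.1 (hsub hz)
    by_cases hij : i = j
    · left; exact hij ▸ hi
    · right; exact mem_iUnion.2 ⟨⟨i, hij⟩, hi⟩
  by_contra hyj
  have hy' := (hcov hy).resolve_left hyj
  obtain ⟨z, -, hz1, hz2⟩ := isPreconnected_closed_iff.1 hA _ _ isClosed_Icc hcl hcov
    ⟨x, hx, hj⟩ ⟨y, hy, hy'⟩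
  obtain ⟨i, hi⟩ := mem_iUnion.1 hz2
  exact i.2 (S.index_unique hi hz1)

lemma preconnected_subset_cyl (S : CookieCutter) (n : ℕ) : ∀ {A : Set ℝ}, IsPreconnected A →
    A ⊆ S.level n → ∀ {x y : ℝ}, x ∈ A → y ∈ A → y ∈ S.cyl n x := by
  induction n with
  | zero => intro A _ _ x y _ _; rw [cyl_zero]; trivial
  | succ n ih =>
    intro A hA hsub x y hx hy
    rw [level_succ] at hsub
    have h1 : A ⊆ S.domain := fun z hz => (hsub hz).1
    rw [mem_cyl_succ]
    refine ⟨S.preconnected_index hA h1 hx hy, ?_⟩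
    refine ih (hA.image _ (S.continuousOn_T.mono h1)) ?_ (mem_image_of_mem _ hx)
      (mem_image_of_mem _ hy)
    rintro _ ⟨z, hz, rfl⟩
    exact (hsub hz).2

lemma component_eq_cyl (S : CookieCutter) {n : ℕ} {x : ℝ} (hx : x ∈ S.level n) :
    connectedComponentIn (S.level n) x = S.cyl n x := by
  apply Subset.antisymm
  · intro y hy
    exact S.preconnected_subset_cyl n isPreconnected_connectedComponentIn
      (connectedComponentIn_subset _ _) (mem_connectedComponentIn hx) hy
  · exact (S.cyl_ordConnected n x).isPreconnected.subset_connectedComponentIn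
      (S.mem_cyl_self hx) (S.cyl_subset_level n x)

/-! ### Expansion and bounded distortion -/

lemma mvt (S : CookieCutter) {j : Fin S.k} {x y : ℝ} (hx : x ∈ Icc (S.u j) (S.v j))
    (hy : y ∈ Icc (S.u j) (S.v j)) :
    ∃ z ∈ Icc (S.u j) (S.v j), |z - x| ≤ |x - y| ∧ |S.T x - S.T y| = |S.T' z| * |x - y| := by
  have key : ∀ a b, a ∈ Icc (S.u j) (S.v j) → b ∈ Icc (S.u j) (S.v j) → a < b →
      ∃ z ∈ Ioo a b, S.T' z = (S.T b - S.T a) / (b - a) := by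
    intro a b ha hb hab
    refine exists_hasDerivAt_eq_slope S.T S.T' hab
      (S.continuousOn_T.mono fun z hz => S.mem_domain ⟨ha.1.trans hz.1, hz.2.trans hb.2⟩) ?_
    intro z hz
    have hz' : z ∈ Icc (S.u j) (S.v j) := ⟨ha.1.trans hz.1.le, hz.2.le.trans hb.2⟩
    refine (S.hasDeriv z (S.mem_domain hz')).hasDerivAt ?_
    exact Filter.mem_of_superset (Icc_mem_nhds (ha.1.trans_lt hz.1) (hz.2.trans_le hb.2))
      fun w hw => S.mem_domain hw
  rcases lt_trichotomy x y with hxy | rfl | hxy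
  · obtain ⟨z, hz, he⟩ := key x y hx hy hxy
    refine ⟨z, ⟨hx.1.trans hz.1.le, hz.2.le.trans hy.2⟩, ?_, ?_⟩
    · rw [abs_sub_comm x y, abs_of_pos (sub_pos.2 hz.1), abs_of_pos (sub_pos.2 hxy)]
      linarith [hz.2]
    · rw [he, abs_div, abs_sub_comm x y, div_mul_cancel₀ _ (abs_pos.2 (sub_pos.2 hxy).ne').ne',
        abs_sub_comm]
  · exact ⟨x, hx, by simp, by simp⟩
  · obtain ⟨z, hz, he⟩ := key y x hy hx hxy
    refine ⟨z, ⟨hy.1.trans hz.1.le, hz.2.le.trans hx.2⟩, ?_, ?_⟩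
    · rw [abs_sub_comm z x, abs_of_pos (sub_pos.2 hz.2), abs_of_pos (sub_pos.2 hxy)]
      linarith [hz.1]
    · rw [he, abs_div, div_mul_cancel₀ _ (abs_pos.2 (sub_pos.2 hxy).ne').ne']

lemma lam_pos (S : CookieCutter) : 0 < S.lam := one_pos.trans S.one_lt_lam

lemma exp_neg_phi (S : CookieCutter) {x : ℝ} (hx : x ∈ S.domain) :
    Real.exp (-S.phi x) = |S.T' x| := by
  rw [phi, neg_neg, Real.exp_log (S.lam_pos.trans_le (S.expanding x hx))]

lemma phi_le (S : CookieCutter) {x : ℝ} (hx : x ∈ S.domain) : S.phi x ≤ -Real.log S.lam :=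
  neg_le_neg (Real.log_le_log S.lam_pos (S.expanding x hx))

lemma birkhoff_succ (S : CookieCutter) (f : ℝ → ℝ) (n : ℕ) (x : ℝ) :
    S.birkhoff f (n + 1) x = f x + S.birkhoff f n (S.T x) := by
  simp only [birkhoff, Finset.sum_range_succ', Function.iterate_succ_apply,
    Function.iterate_zero, id]
  ring

lemma birkhoff_phi_le (S : CookieCutter) {x : ℝ} (hx : x ∈ S.repeller) (n : ℕ) :
    S.birkhoff S.phi n x ≤ -(n * Real.log S.lam) := by
  have : S.birkhoff S.phi n x ≤ ∑ _j ∈ Finset.range n, (-Real.log S.lam) :=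
    Finset.sum_le_sum fun j _ => S.phi_le (hx j)
  simpa using this

lemma phi_sub_le (S : CookieCutter) {x y : ℝ} (hx : x ∈ S.domain) (hy : y ∈ S.domain) :
    S.phi x - S.phi y ≤ S.Ceps * |x - y| ^ S.eps := by
  have h1 : 1 ≤ |S.T' x| := S.one_lt_lam.le.trans (S.expanding x hx)
  have h2 : 1 ≤ |S.T' y| := S.one_lt_lam.le.trans (S.expanding y hy)
  have h3 : |S.T' y| - |S.T' x| ≤ S.Ceps * |x - y| ^ S.eps := by
    refine le_trans (abs_sub_abs_le_abs_sub _ _) ?_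
    rw [abs_sub_comm]
    exact S.holder x hx y hy
  have h4 : 0 ≤ S.Ceps * |x - y| ^ S.eps := mul_nonneg S.Ceps_nonneg (by positivity)
  have h5 : S.phi x - S.phi y = Real.log (|S.T' y| / |S.T' x|) := by
    rw [Real.log_div (by positivity) (by positivity)]; simp only [phi]; ring
  rw [h5]
  refine (Real.log_le_sub_one_of_pos (by positivity)).trans ?_
  rw [div_sub_one (by positivity), div_le_iff₀ (by positivity)]
  nlinarith

lemma expand (S : CookieCutter) {j : Fin S.k} {x y : ℝ} (hx : x ∈ Icc (S.u j) (S.v j))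
    (hy : y ∈ Icc (S.u j) (S.v j)) : S.lam * |x - y| ≤ |S.T x - S.T y| := by
  obtain ⟨z, hz, -, h⟩ := S.mvt hx hy
  rw [h]
  exact mul_le_mul_of_nonneg_right (S.expanding z (S.mem_domain hz)) (abs_nonneg _)

lemma cyl_contract (S : CookieCutter) (n : ℕ) : ∀ {x y : ℝ}, x ∈ Icc (0:ℝ) 1 → y ∈ Icc (0:ℝ) 1 →
    y ∈ S.cyl n x → |x - y| ≤ (S.lam⁻¹) ^ n := by
  induction n with
  | zero =>
    intro x y hx hy _
    rw [pow_zero, abs_le]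
    constructor <;> linarith [hx.1, hx.2, hy.1, hy.2]
  | succ n ih =>
    intro x y _ _ hc
    obtain ⟨⟨j, hxj, hyj⟩, hc'⟩ := S.mem_cyl_succ.1 hc
    have h1 := ih ((S.bijOn j).mapsTo hxj) ((S.bijOn j).mapsTo hyj) hc'
    have h2 := (S.expand hxj hyj).trans h1
    rw [pow_succ', ← div_eq_inv_mul, le_div_iff₀ S.lam_pos]
    linarith

/-- A bound for the logarithmic distortion accumulated over `n` steps: after `n` steps two points
of a common cylinder are at distance at most `1`, hence `i + 1` steps earlier at distance at most
`lam⁻¹ ^ (i + 1)`. -/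
noncomputable def distSum (S : CookieCutter) (n : ℕ) : ℝ :=
  S.Ceps * ∑ i ∈ Finset.range n, ((S.lam⁻¹) ^ (i + 1)) ^ S.eps

lemma distSum_bound (S : CookieCutter) : ∃ K, ∀ n, S.distSum n ≤ K := by
  have hl : 0 < S.lam⁻¹ := inv_pos.2 S.lam_pos
  have hr0 : 0 ≤ S.lam⁻¹ ^ S.eps := by positivity
  have hr1 : S.lam⁻¹ ^ S.eps < 1 :=
    Real.rpow_lt_one hl.le (inv_lt_one_of_one_lt₀ S.one_lt_lam) S.eps_pos
  have he : ∀ i : ℕ, ((S.lam⁻¹) ^ (i + 1)) ^ S.eps = (S.lam⁻¹ ^ S.eps) ^ (i + 1) := by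
    intro i
    rw [← Real.rpow_natCast, ← Real.rpow_natCast, ← Real.rpow_mul hl.le, ← Real.rpow_mul hl.le,
      mul_comm]
  have hs : Summable fun i : ℕ => (S.lam⁻¹ ^ S.eps) ^ (i + 1) :=
    (summable_nat_add_iff 1).2 (summable_geometric_of_lt_one hr0 hr1)
  refine ⟨S.Ceps * ∑' i : ℕ, (S.lam⁻¹ ^ S.eps) ^ (i + 1), fun n => ?_⟩
  refine mul_le_mul_of_nonneg_left ?_ S.Ceps_nonneg
  simp only [he]
  exact hs.sum_le_tsum _ fun i _ => by positivity

lemma distortion_aux (S : CookieCutter) (n : ℕ) : ∀ {x y : ℝ}, x ∈ Icc (0:ℝ) 1 →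
    y ∈ Icc (0:ℝ) 1 → y ∈ S.cyl n x →
    |x - y| * Real.exp (-S.birkhoff S.phi n x - S.distSum n) ≤ |S.T^[n] x - S.T^[n] y| ∧
    |S.T^[n] x - S.T^[n] y| ≤ |x - y| * Real.exp (-S.birkhoff S.phi n x + S.distSum n) := by
  induction n with
  | zero => intro x y _ _ _; simp [birkhoff, distSum]
  | succ n ih =>
    intro x y hx hy hc
    have hxy := S.cyl_contract (n + 1) hx hy hc
    obtain ⟨⟨j, hxj, hyj⟩, hc'⟩ := S.mem_cyl_succ.1 hc
    obtain ⟨h1, h2⟩ := ih ((S.bijOn j).mapsTo hxj) ((S.bijOn j).mapsTo hyj) hc'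
    obtain ⟨z, hz, hzx, he⟩ := S.mvt hxj hyj
    have hzd := S.mem_domain hz
    have hxd := S.mem_domain hxj
    rw [← S.exp_neg_phi hzd] at he
    have hb : S.Ceps * |z - x| ^ S.eps ≤ S.Ceps * ((S.lam⁻¹) ^ (n + 1)) ^ S.eps :=
      mul_le_mul_of_nonneg_left
        (Real.rpow_le_rpow (abs_nonneg _) (hzx.trans hxy) S.eps_pos.le) S.Ceps_nonneg
    have hb1 := (S.phi_sub_le hzd hxd).trans hb
    have hb2 := S.phi_sub_le hxd hzd
    rw [abs_sub_comm] at hb2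
    replace hb2 := hb2.trans hb
    have hK : S.distSum (n + 1) = S.distSum n + S.Ceps * ((S.lam⁻¹) ^ (n + 1)) ^ S.eps := by
      simp only [distSum, Finset.sum_range_succ]; ring
    rw [Function.iterate_succ_apply, Function.iterate_succ_apply, birkhoff_succ]
    constructor
    · refine le_trans ?_ h1
      rw [he, mul_comm (Real.exp _), mul_assoc, ← Real.exp_add]
      refine mul_le_mul_of_nonneg_left (Real.exp_le_exp.2 ?_) (abs_nonneg _)
      linarith
    · refine h2.trans ?_
      rw [he, mul_comm (Real.exp _), mul_assoc, ← Real.exp_add]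
      refine mul_le_mul_of_nonneg_left (Real.exp_le_exp.2 ?_) (abs_nonneg _)
      linarith

/-- Bounded distortion: `|x - y| ≍ |Tⁿ x - Tⁿ y| * exp (φⁿ x)` on cylinders of order `n`; the first
bound uses `|Tⁿ x - Tⁿ y| ≤ 1`. -/
lemma distortion (S : CookieCutter) : ∃ M : ℝ, 0 < M ∧ ∀ n, ∀ x ∈ S.repeller, ∀ y ∈ S.repeller,
    y ∈ S.cyl n x → |x - y| ≤ M * Real.exp (S.birkhoff S.phi n x) ∧
      |S.T^[n] x - S.T^[n] y| * Real.exp (S.birkhoff S.phi n x) ≤ M * |x - y| := by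
  obtain ⟨K, hK⟩ := S.distSum_bound
  refine ⟨Real.exp K, Real.exp_pos _, fun n x hx y hy hc => ?_⟩
  obtain ⟨h1, h2⟩ := S.distortion_aux n (x := x) (y := y) (S.domain_subset_unit (hx 0))
    (S.domain_subset_unit (hy 0)) hc
  have hn := S.domain_subset_unit (hx n)
  have hn' := S.domain_subset_unit (hy n)
  constructor
  · have h3 : |x - y| * Real.exp (-S.birkhoff S.phi n x - K) ≤ 1 := by
      refine le_trans ?_ (h1.trans ?_)
      · refine mul_le_mul_of_nonneg_left (Real.exp_le_exp.2 ?_) (abs_nonneg _)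
        linarith [hK n]
      · rw [abs_le]
        constructor <;> linarith [hn.1, hn.2, hn'.1, hn'.2]
    have h4 : -S.birkhoff S.phi n x - K = -(K + S.birkhoff S.phi n x) := by ring
    rw [h4, Real.exp_neg, ← div_eq_mul_inv, div_le_one (Real.exp_pos _)] at h3
    rwa [← Real.exp_add]
  · refine (mul_le_mul_of_nonneg_right h2 (Real.exp_pos _).le).trans ?_
    rw [mul_assoc, ← Real.exp_add, mul_comm]
    refine mul_le_mul_of_nonneg_right (Real.exp_le_exp.2 ?_) (abs_nonneg _)
    linarith [hK n]

lemma gap (S : CookieCutter) : ∃ δ : ℝ, 0 < δ ∧ ∀ i j, i ≠ j → ∀ x ∈ Icc (S.u i) (S.v i),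
    ∀ y ∈ Icc (S.u j) (S.v j), δ ≤ |x - y| := by
  have h : ∀ p : Fin S.k × Fin S.k, ∃ r : ℝ, 0 < r ∧ (p.1 ≠ p.2 →
      ∀ x ∈ Icc (S.u p.1) (S.v p.1), ∀ y ∈ Icc (S.u p.2) (S.v p.2), r ≤ |x - y|) := by
    rintro ⟨i, j⟩
    by_cases hij : i = j
    · exact ⟨1, one_pos, fun h => absurd hij h⟩
    · obtain ⟨r, hr, hd⟩ := Metric.exists_pos_forall_lt_edist
        (isCompact_Icc (a := S.u i) (b := S.v i)) (isClosed_Icc (a := S.u j) (b := S.v j))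
        (S.pair_disj hij)
      refine ⟨r, hr, fun _ x hx y hy => ?_⟩
      have := hd x hx y hy
      rw [edist_nndist] at this
      have h2 : r < nndist x y := by exact_mod_cast this
      have h3 : (r : ℝ) < dist x y := by exact_mod_cast h2
      exact h3.le
  choose r hr0 hr using h
  have hk : 0 < S.k := by have := S.two_le_k; omega
  obtain ⟨p, -, hp⟩ := Finset.exists_min_image Finset.univ r ⟨(⟨0, hk⟩, ⟨0, hk⟩), Finset.mem_univ _⟩
  exact ⟨r p, hr0 p, fun i j hij x hx y hy =>
    (hp (i, j) (Finset.mem_univ _)).trans (hr (i, j) hij x hx y hy)⟩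

/-! ### Masses of cylinders -/

lemma birkhoff_coh (S : CookieCutter) {ψ h : ℝ → ℝ} {α : ℝ}
    (hcoh : ∀ x ∈ S.repeller, ψ x - α * S.phi x = h (S.T x) - h x) (n : ℕ) :
    ∀ x ∈ S.repeller, S.birkhoff ψ n x = α * S.birkhoff S.phi n x + (h (S.T^[n] x) - h x) := by
  induction n with
  | zero => intro x _; simp [birkhoff]
  | succ n ih =>
    intro x hx
    rw [birkhoff_succ, birkhoff_succ, ih _ (S.repeller_T hx), Function.iterate_succ_apply]
    linarith [hcoh x hx]

lemma gibbs_cyl (S : CookieCutter) {ψ h : ℝ → ℝ} {α : ℝ} {μ : Measure ℝ}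
    (hμ : S.IsGibbs ψ μ) (hcont : ContinuousOn h S.repeller)
    (hcoh : ∀ x ∈ S.repeller, ψ x - α * S.phi x = h (S.T x) - h x) :
    ∃ c d : ℝ, 0 < c ∧ 0 < d ∧ ∀ n, ∀ x ∈ S.repeller,
      c * Real.exp (α * S.birkhoff S.phi n x) ≤ (μ (S.cyl n x)).toReal ∧
      (μ (S.cyl n x)).toReal ≤ d * Real.exp (α * S.birkhoff S.phi n x) := by
  obtain ⟨hprob, -, C, D, hC, hD, hG⟩ := hμ
  obtain ⟨B, hB⟩ := S.isCompact_repeller.exists_bound_of_continuousOn hcont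
  -- The comparison with `1` takes care of level `0`, which the Gibbs property does not cover.
  refine ⟨min 1 (C * Real.exp (-(2 * B))), max 1 (D * Real.exp (2 * B)), by positivity,
    by positivity, fun n x hx => ?_⟩
  rcases Nat.eq_zero_or_pos n with rfl | hn
  · simp [cyl_zero, birkhoff]
  have hlev := S.repeller_subset_level n hx
  have hcyl := S.component_eq_cyl hlev
  obtain ⟨h1, h2⟩ := hG n hn (S.cyl n x) ⟨x, hlev, hcyl.symm⟩ x ⟨S.mem_cyl_self hlev, hx⟩
  rw [S.birkhoff_coh hcoh n x hx] at h1 h2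
  have b1 := abs_le.1 (hB x hx)
  have b2 := abs_le.1 (hB _ (S.repeller_iter hx n))
  constructor
  · refine le_trans ?_ h1
    refine (mul_le_mul_of_nonneg_right (min_le_right _ _) (Real.exp_pos _).le).trans ?_
    rw [mul_assoc, ← Real.exp_add]
    refine mul_le_mul_of_nonneg_left (Real.exp_le_exp.2 ?_) hC.le
    linarith
  · refine h2.trans ?_
    refine le_trans ?_ (mul_le_mul_of_nonneg_right (le_max_right _ _) (Real.exp_pos _).le)
    rw [mul_assoc, ← Real.exp_add]
    refine mul_le_mul_of_nonneg_left (Real.exp_le_exp.2 ?_) hD.le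
    linarith

lemma repeller_nonempty (S : CookieCutter) {μ : Measure ℝ} [IsProbabilityMeasure μ]
    (h0 : μ S.repellerᶜ = 0) : S.repeller.Nonempty := by
  by_contra hne
  rw [not_nonempty_iff_eq_empty] at hne
  simp [hne] at h0

lemma tendsto_birkhoff_phi (S : CookieCutter) {x : ℝ} (hx : x ∈ S.repeller) :
    Filter.Tendsto (fun n => S.birkhoff S.phi n x) Filter.atTop Filter.atBot := by
  refine Filter.tendsto_atBot_mono (S.birkhoff_phi_le hx) ?_
  exact Filter.tendsto_neg_atTop_atBot.comp
    (tendsto_natCast_atTop_atTop.atTop_mul_const (Real.log_pos S.one_lt_lam))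

/-- Otherwise the masses of the cylinders around a point would tend to infinity. -/
lemma alpha_nonneg (S : CookieCutter) {α c : ℝ} {μ : Measure ℝ} [IsProbabilityMeasure μ]
    (hc : 0 < c) {x : ℝ} (hx : x ∈ S.repeller)
    (hl : ∀ n, c * Real.exp (α * S.birkhoff S.phi n x) ≤ (μ (S.cyl n x)).toReal) : 0 ≤ α := by
  by_contra hα
  push Not at hα
  have h1 : Filter.Tendsto (fun n => c * Real.exp (α * S.birkhoff S.phi n x))
      Filter.atTop Filter.atTop :=
    (Real.tendsto_exp_atTop.comp
      ((S.tendsto_birkhoff_phi hx).const_mul_atBot_of_neg hα)).const_mul_atTop hc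
  obtain ⟨n, hn⟩ := (h1.eventually_gt_atTop 1).exists
  have h2 : (μ (S.cyl n x)).toReal ≤ 1 := ENNReal.toReal_mono ENNReal.one_ne_top prob_le_one
  linarith [hl n]

/-! ### The two dimension bounds -/

/-- The points of the repeller with itinerary `w`. -/
def word (S : CookieCutter) (n : ℕ) (w : Fin n → Fin S.k) : Set ℝ :=
  {x | x ∈ S.repeller ∧ ∀ i : Fin n, S.T^[i] x ∈ Icc (S.u (w i)) (S.v (w i))}

lemma hausdorff_ne_top (S : CookieCutter) {α c : ℝ} {μ : Measure ℝ} [IsProbabilityMeasure μ]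
    (hα : 0 ≤ α) (hc : 0 < c)
    (hl : ∀ n, ∀ x ∈ S.repeller,
      c * Real.exp (α * S.birkhoff S.phi n x) ≤ (μ (S.cyl n x)).toReal) :
    Measure.hausdorffMeasure α S.repeller ≠ ⊤ := by
  classical
  obtain ⟨M, hM, hdist⟩ := S.distortion
  -- Only nonempty cylinders are used: for `α = 0` an empty set would contribute `0 ^ 0 = 1`.
  let ι : ℕ → Type := fun n => {w : Fin n → Fin S.k // (S.word n w).Nonempty}
  have hdiam : ∀ n (w : ι n), Metric.ediam (S.word n w.1) ≤
      ENNReal.ofReal (2 * M * Real.exp (S.birkhoff S.phi n w.2.some)) := by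
    intro n w
    have hx := w.2.some_mem
    have hcyl : ∀ y ∈ S.word n w.1, y ∈ S.cyl n w.2.some := fun y hy i hi =>
      ⟨w.1 ⟨i, hi⟩, hx.2 ⟨i, hi⟩, hy.2 ⟨i, hi⟩⟩
    refine Metric.ediam_le fun y hy z hz => ?_
    rw [edist_dist]
    refine ENNReal.ofReal_le_ofReal ?_
    have h1 := (hdist n _ hx.1 y hy.1 (hcyl y hy)).1
    have h2 := (hdist n _ hx.1 z hz.1 (hcyl z hz)).1
    have h3 := dist_triangle_left y z w.2.some
    rw [Real.dist_eq, Real.dist_eq, Real.dist_eq] at h3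
    rw [Real.dist_eq]
    linarith
  have hr : Filter.Tendsto
      (fun n : ℕ => ENNReal.ofReal (2 * M * Real.exp (-(n * Real.log S.lam))))
      Filter.atTop (nhds 0) := by
    have h1 : Filter.Tendsto (fun n : ℕ => 2 * M * Real.exp (-(n * Real.log S.lam)))
        Filter.atTop (nhds (2 * M * 0)) :=
      (Real.tendsto_exp_atBot.comp (Filter.tendsto_neg_atTop_atBot.comp
        (tendsto_natCast_atTop_atTop.atTop_mul_const (Real.log_pos S.one_lt_lam)))).const_mul _
    simpa using ENNReal.tendsto_ofReal h1
  have hmain := Measure.hausdorffMeasure_le_liminf_sum (ι := ι) α S.repeller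
    (l := Filter.atTop) _ hr (fun n w => S.word n w.1)
    (Filter.Eventually.of_forall fun n w => (hdiam n w).trans (ENNReal.ofReal_le_ofReal
      (mul_le_mul_of_nonneg_left (Real.exp_le_exp.2 (S.birkhoff_phi_le w.2.some_mem.1 n))
        (by positivity))))
    (Filter.Eventually.of_forall fun n x hx => by
      choose w hw using fun i : Fin n => mem_iUnion.1 (hx i)
      exact mem_iUnion.2 ⟨⟨w, x, hx, hw⟩, hx, hw⟩)
  have hsum : ∀ n, ∑ w : ι n, Metric.ediam (S.word n w.1) ^ α ≤
      ENNReal.ofReal ((2 * M) ^ α / c) := by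
    intro n
    have hterm : ∀ w : ι n, Metric.ediam (S.word n w.1) ^ α ≤
        ENNReal.ofReal ((2 * M) ^ α / c) * μ (S.cyl n w.2.some) := by
      intro w
      calc Metric.ediam (S.word n w.1) ^ α
          ≤ ENNReal.ofReal (2 * M * Real.exp (S.birkhoff S.phi n w.2.some)) ^ α := by
            gcongr; exact hdiam n w
        _ = ENNReal.ofReal ((2 * M) ^ α * Real.exp (α * S.birkhoff S.phi n w.2.some)) := by
            rw [ENNReal.ofReal_rpow_of_nonneg (by positivity) hα,
              Real.mul_rpow (by positivity) (Real.exp_pos _).le, ← Real.exp_mul, mul_comm α]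
        _ ≤ ENNReal.ofReal ((2 * M) ^ α / c * (μ (S.cyl n w.2.some)).toReal) := by
            refine ENNReal.ofReal_le_ofReal ?_
            rw [div_mul_eq_mul_div, le_div_iff₀ hc, mul_assoc]
            refine mul_le_mul_of_nonneg_left ?_ (by positivity)
            rw [mul_comm]
            exact hl n _ w.2.some_mem.1
        _ = _ := by
            rw [ENNReal.ofReal_mul (by positivity), ENNReal.ofReal_toReal (measure_ne_top _ _)]
    refine (Finset.sum_le_sum fun w _ => hterm w).trans ?_
    rw [← Finset.mul_sum]
    have hdisj : Pairwise (Function.onFun Disjoint fun w : ι n => S.cyl n w.2.some) := by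
      intro w w' hww
      refine Set.disjoint_left.2 fun y hy hy' => hww (Subtype.ext (funext fun i => ?_))
      obtain ⟨j, hj, hyj⟩ := hy i i.2
      obtain ⟨j', hj', hyj'⟩ := hy' i i.2
      rw [S.index_unique (w.2.some_mem.2 i) hj, S.index_unique (w'.2.some_mem.2 i) hj',
        S.index_unique hyj hyj']
    have hone : ∑ w : ι n, μ (S.cyl n w.2.some) ≤ 1 := by
      rw [← tsum_fintype (L := .unconditional _), ← measure_iUnion hdisj fun w => (S.cyl_ordConnected n _).measurableSet]
      exact prob_le_one
    exact (mul_le_mul_right hone _).trans (mul_one _).le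
  have hlim : Filter.liminf (fun n => ∑ w : ι n, Metric.ediam (S.word n w.1) ^ α)
      Filter.atTop ≤ ENNReal.ofReal ((2 * M) ^ α / c) := by
    refine (Filter.liminf_le_liminf (Filter.Eventually.of_forall hsum)).trans ?_
    simp
  exact ((hmain.trans hlim).trans_lt ENNReal.ofReal_lt_top).ne

lemma measure_le_diam (S : CookieCutter) {α d : ℝ} {μ : Measure ℝ} [IsProbabilityMeasure μ]
    (h0 : μ S.repellerᶜ = 0) (hα : 0 < α) (hd : 0 < d)
    (hu : ∀ n, ∀ x ∈ S.repeller,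
      (μ (S.cyl n x)).toReal ≤ d * Real.exp (α * S.birkhoff S.phi n x)) :
    ∃ A : ℝ, 0 < A ∧ ∀ U : Set ℝ, μ U ≤ ENNReal.ofReal A * Metric.ediam U ^ α := by
  obtain ⟨M, hM, hdist⟩ := S.distortion
  obtain ⟨δ, hδ, hgap⟩ := S.gap
  refine ⟨d * (M / δ) ^ α, by positivity, fun U => ?_⟩
  have hU : μ U = μ (U ∩ S.repeller) := (measure_inter_conull h0).symm
  rw [hU]
  rcases (U ∩ S.repeller).eq_empty_or_nonempty with he | ⟨x, hxU, hx⟩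
  · simp [he]
  by_cases hall : ∀ n, U ∩ S.repeller ⊆ S.cyl n x
  · have h1 : Filter.Tendsto (fun n => d * Real.exp (α * S.birkhoff S.phi n x))
        Filter.atTop (nhds (d * 0)) :=
      (Real.tendsto_exp_atBot.comp
        ((S.tendsto_birkhoff_phi hx).const_mul_atBot hα)).const_mul d
    have h2 : (μ (U ∩ S.repeller)).toReal ≤ d * 0 :=
      ge_of_tendsto' h1 fun n =>
        (ENNReal.toReal_mono (measure_ne_top _ _) (measure_mono (hall n))).trans (hu n x hx)
    have h3 : μ (U ∩ S.repeller) = 0 := by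
      have h4 : (μ (U ∩ S.repeller)).toReal = 0 :=
        le_antisymm (by simpa using h2) ENNReal.toReal_nonneg
      exact ((ENNReal.toReal_eq_zero_iff _).1 h4).resolve_right (measure_ne_top _ _)
    rw [h3]; exact zero_le
  · push Not at hall
    classical
    obtain ⟨n, hn⟩ : ∃ n, Nat.find hall = n + 1 := by
      refine Nat.exists_eq_succ_of_ne_zero fun h => ?_
      have := Nat.find_spec hall
      rw [h, cyl_zero] at this
      exact this (subset_univ _)
    have hsub : U ∩ S.repeller ⊆ S.cyl n x := by
      have := Nat.find_min hall (m := n) (by omega)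
      exact not_not.1 this
    have hnot := Nat.find_spec hall
    rw [hn] at hnot
    obtain ⟨y, ⟨hyU, hy⟩, hyc⟩ := Set.not_subset.1 hnot
    have hyn := hsub ⟨hyU, hy⟩
    obtain ⟨i, hi⟩ := mem_iUnion.1 (hx n)
    obtain ⟨j, hj⟩ := mem_iUnion.1 (hy n)
    have hij : i ≠ j := by
      rintro rfl
      refine hyc fun m hm => ?_
      rcases Nat.lt_succ_iff_lt_or_eq.1 hm with hm | rfl
      · exact hyn m hm
      · exact ⟨i, hi, hj⟩
    have h1 := hgap i j hij _ hi _ hj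
    have h2 := (hdist n x hx y hy hyn).2
    have h3 : Real.exp (S.birkhoff S.phi n x) ≤ M / δ * |x - y| := by
      rw [div_mul_eq_mul_div, le_div_iff₀ hδ, mul_comm]
      exact (mul_le_mul_of_nonneg_right h1 (Real.exp_pos _).le).trans h2
    have h4 : (μ (S.cyl n x)).toReal ≤ d * (M / δ) ^ α * |x - y| ^ α := by
      refine (hu n x hx).trans ?_
      rw [mul_assoc, ← Real.mul_rpow (by positivity) (abs_nonneg _), mul_comm α, Real.exp_mul]
      exact mul_le_mul_of_nonneg_left (Real.rpow_le_rpow (Real.exp_pos _).le h3 hα.le) hd.le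
    calc μ (U ∩ S.repeller) ≤ μ (S.cyl n x) := measure_mono hsub
      _ ≤ ENNReal.ofReal (d * (M / δ) ^ α * |x - y| ^ α) :=
        (ENNReal.le_ofReal_iff_toReal_le (measure_ne_top _ _) (by positivity)).2 h4
      _ = ENNReal.ofReal (d * (M / δ) ^ α) * edist x y ^ α := by
        rw [ENNReal.ofReal_mul (by positivity), edist_dist, Real.dist_eq,
          ENNReal.ofReal_rpow_of_nonneg (abs_nonneg _) hα.le]
      _ ≤ _ := by
        gcongr
        exact Metric.edist_le_ediam_of_mem hxU hyU

lemma hausdorff_ne_zero (S : CookieCutter) {α d : ℝ} {μ : Measure ℝ} [IsProbabilityMeasure μ]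
    (h0 : μ S.repellerᶜ = 0) (hα : 0 < α) (hd : 0 < d)
    (hu : ∀ n, ∀ x ∈ S.repeller,
      (μ (S.cyl n x)).toReal ≤ d * Real.exp (α * S.birkhoff S.phi n x)) :
    Measure.hausdorffMeasure α S.repeller ≠ 0 := by
  obtain ⟨A, hA, hAU⟩ := S.measure_le_diam h0 hα hd hu
  have hA0 : ENNReal.ofReal A ≠ 0 := by simpa using hA
  have hle : (ENNReal.ofReal A)⁻¹ • μ ≤ Measure.hausdorffMeasure α := by
    refine Measure.le_hausdorffMeasure α _ 1 one_pos fun U _ => ?_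
    rw [Measure.smul_apply, smul_eq_mul]
    calc (ENNReal.ofReal A)⁻¹ * μ U
        ≤ (ENNReal.ofReal A)⁻¹ * (ENNReal.ofReal A * Metric.ediam U ^ α) := by
          gcongr; exact hAU U
      _ = _ := by rw [← mul_assoc, ENNReal.inv_mul_cancel hA0 ENNReal.ofReal_ne_top, one_mul]
  intro hz
  have h1 := hle S.repeller
  have h2 : μ S.repeller = 1 := by
    have := measure_inter_conull (s := univ) h0
    rw [univ_inter, measure_univ] at this
    exact this
  rw [hz, Measure.smul_apply, h2, smul_eq_mul, mul_one] at h1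
  simp at h1

end CookieCutter

/-- If `ψ - αφ` is cohomologous to zero on the repeller, then `α` equals the
Hausdorff dimension of the repeller. -/
theorem cohomologous_zero_eq_dimH (S : CookieCutter) (ψ : ℝ → ℝ)
    (hψ : CookieCutter.IsHolderOn ψ S.repeller)
    (μ : Measure ℝ) (hμ : S.IsGibbs ψ μ) (α : ℝ)
    (h : ℝ → ℝ) (hcont : ContinuousOn h S.repeller)
    (hcoh : ∀ x ∈ S.repeller, ψ x - α * S.phi x = h (S.T x) - h x) :
    α = (dimH S.repeller).toReal := by
  obtain ⟨c, d, hc, hd, hG⟩ := S.gibbs_cyl hμ hcont hcoh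
  obtain ⟨hprob, h0, -⟩ := hμ
  obtain ⟨x₀, hx₀⟩ := S.repeller_nonempty h0
  have hα : 0 ≤ α := S.alpha_nonneg hc hx₀ fun n => (hG n x₀ hx₀).1
  have htop := S.hausdorff_ne_top hα hc fun n x hx => (hG n x hx).1
  lift α to NNReal using hα
  have hupper : dimH S.repeller ≤ α := dimH_le_of_hausdorffMeasure_ne_top htop
  have hlower : (α : ENNReal) ≤ dimH S.repeller := by
    rcases eq_or_ne α 0 with rfl | hne
    · simp
    · exact le_dimH_of_hausdorffMeasure_ne_zero (S.hausdorff_ne_zero h0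
        (by exact_mod_cast pos_iff_ne_zero.2 hne) hd fun n x hx => (hG n x hx).2)
  rw [le_antisymm hupper hlower]
  simp
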